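/- arXiv:2209.11319 — 2 statements merged into one kernel-verified Lean document; each statement's English description precedes it below -/
import Mathlib

section
/- For any sequence of perfect matchings M_m in K_{2m,2m,2m}, the ratio pm(K_{2m,2m,2m} - M_m) / pm(K_{2m,2m,2m}) converges to e^{-3/4} as m → ∞. -/
open SimpleGraph Filter Topology

/-- The number of perfect matchings of a graph `G`. -/
noncomputable def pmCount {V : Type} (G : SimpleGraph V) : ℕ :=
  {M : G.Subgraph | M.IsPerfectMatching}.ncard

/-!
By inclusion–exclusion over the edges of a perfect matching `g`, the proportion of perfect matchings
avoiding `g` is an alternating sum, over edge sets `A ⊆ g`, of the proportion of perfect matchings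
containing `A`. Sort the edges of a tripartite graph into three types by the class they miss. The
class sizes determine the number `x i` of edges of each type in every perfect matching, and the
number of perfect matchings is `∏ (class size)! / ∏ (x i)!`. Hence the terms depend only on the
numbers `a i` of edges of each type in `A`, and for classes of size `2m` the sum of those with given
`a` tends to `∏ i, (-1/4) ^ a i / (a i)!`. These sums are bounded by `∏ i, 1 / (a i)!` uniformly in
`m`, so dominated convergence gives the limit `(e ^ (-1/4)) ^ 3`.
-/

open Finset
open scoped Nat

section Matchings

variable {V : Type*} [Fintype V] [DecidableEq V] {G : SimpleGraph V} {S D : Finset V} {f g : V → V}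

open scoped Classical in
/-- The perfect matchings of the subgraph of `G` induced on `S`, encoded as involutions of the whole
vertex set that move the vertices of `S` to their partners and fix all other vertices. -/
noncomputable def matchingsOn (G : SimpleGraph V) (S : Finset V) : Finset (V → V) :=
  {f | f.Involutive ∧ (∀ v ∈ S, G.Adj v (f v)) ∧ ∀ v ∉ S, f v = v}

lemma mem_matchingsOn :
    f ∈ matchingsOn G S ↔ f.Involutive ∧ (∀ v ∈ S, G.Adj v (f v)) ∧ ∀ v ∉ S, f v = v := by
  simp [matchingsOn]

lemma mem_matchingsOn_univ :
    f ∈ matchingsOn G univ ↔ f.Involutive ∧ ∀ v, G.Adj v (f v) := by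
  simp [mem_matchingsOn]

lemma matchingsOn_empty : matchingsOn G ∅ = {id} := by
  ext f
  simp only [mem_matchingsOn, notMem_empty, false_implies, implies_true, not_false_eq_true,
    true_implies, true_and, mem_singleton, funext_iff, id]
  exact ⟨And.right, fun h => ⟨fun v => by rw [h, h], h⟩⟩

lemma apply_mem_of_mem_matchingsOn (hf : f ∈ matchingsOn G S) {v : V} (hv : v ∈ S) : f v ∈ S := by
  obtain ⟨hinv, hadj, hfix⟩ := mem_matchingsOn.mp hf
  by_contra h
  exact (hadj v hv).ne ((hinv v).symm.trans (hfix (f v) h))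

lemma piecewise_id_mem_matchingsOn_sdiff (hf : f ∈ matchingsOn G S) (hD : ∀ v ∈ D, f v ∈ D) :
    D.piecewise id f ∈ matchingsOn G (S \ D) := by
  obtain ⟨hinv, hadj, hfix⟩ := mem_matchingsOn.mp hf
  have hD' : ∀ v ∉ D, f v ∉ D := fun v hv h => hv (hinv v ▸ hD _ h)
  refine mem_matchingsOn.mpr ⟨fun v => ?_, fun v hv => ?_, fun v hv => ?_⟩
  · by_cases hv : v ∈ D <;> simp [hv, hD', hinv v]
  · rw [Finset.mem_sdiff] at hv
    simpa [hv.2] using hadj v hv.1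
  · by_cases hvD : v ∈ D <;> simp_all

lemma piecewise_mem_matchingsOn (hg : g ∈ matchingsOn G D) (hf : f ∈ matchingsOn G (S \ D))
    (hDS : D ⊆ S) : D.piecewise g f ∈ matchingsOn G S := by
  have hgD := fun v => apply_mem_of_mem_matchingsOn hg (v := v)
  have hfS := fun v => apply_mem_of_mem_matchingsOn hf (v := v)
  obtain ⟨hg_inv, hg_adj, -⟩ := mem_matchingsOn.mp hg
  obtain ⟨hinv, hadj, hfix⟩ := mem_matchingsOn.mp hf
  have hfD : ∀ v ∉ D, f v ∉ D := fun v hv => by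
    by_cases hvS : v ∈ S \ D
    · exact (Finset.mem_sdiff.mp (hfS v hvS)).2
    · rwa [hfix v hvS]
  refine mem_matchingsOn.mpr ⟨fun v => ?_, fun v hv => ?_, fun v hv => ?_⟩
  · by_cases hv : v ∈ D <;> simp [hv, hgD, hfD, hinv v, hg_inv v]
  · by_cases hvD : v ∈ D <;> simp_all
  · have hvD : v ∉ D := fun h => hv (hDS h)
    simp_all

lemma card_filter_forall_mem_eq (hg : g ∈ matchingsOn G D) (hDS : D ⊆ S) :
    #{f ∈ matchingsOn G S | ∀ v ∈ D, f v = g v} = #(matchingsOn G (S \ D)) := by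
  refine card_nbij' (fun f => D.piecewise id f) (fun f => D.piecewise g f) ?_ ?_ ?_ ?_
  · intro f hf
    obtain ⟨hf, hfg⟩ := mem_filter.mp hf
    exact piecewise_id_mem_matchingsOn_sdiff hf fun v hv =>
      hfg v hv ▸ apply_mem_of_mem_matchingsOn hg hv
  · intro f hf
    exact mem_filter.mpr ⟨piecewise_mem_matchingsOn hg hf hDS,
      fun v hv => piecewise_eq_of_mem _ _ _ hv⟩
  · intro f hf
    ext v
    by_cases hv : v ∈ D <;> simp_all
  · intro f hf
    ext v
    by_cases hv : v ∈ D
    · simp [hv, (mem_matchingsOn.mp hf).2.2 v (by simp [hv])]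
    · simp [hv]

lemma swap_mem_matchingsOn {v w : V} (h : G.Adj v w) :
    ⇑(Equiv.swap v w) ∈ matchingsOn G {v, w} := by
  refine mem_matchingsOn.mpr ⟨Equiv.swap_apply_self v w, ?_, fun u hu => ?_⟩
  · simp [h, h.symm]
  · simp only [mem_insert, mem_singleton, not_or] at hu
    exact Equiv.swap_apply_of_ne_of_ne hu.1 hu.2

lemma card_matchingsOn_eq_sum [DecidableRel G.Adj] {v : V} (hv : v ∈ S) :
    #(matchingsOn G S) = ∑ w ∈ S with G.Adj v w, #(matchingsOn G (S \ {v, w})) := by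
  rw [card_eq_sum_card_fiberwise (f := fun f => f v) (t := {w ∈ S | G.Adj v w})]
  · refine sum_congr rfl fun w hw => ?_
    obtain ⟨hwS, hvw⟩ := mem_filter.mp hw
    rw [← card_filter_forall_mem_eq (swap_mem_matchingsOn hvw)
      (by simp [insert_subset_iff, hv, hwS])]
    congr 1
    refine filter_congr fun f hf => ?_
    have hinv := (mem_matchingsOn.mp hf).1
    simp only [mem_insert, mem_singleton, forall_eq_or_imp, forall_eq, Equiv.swap_apply_left,
      Equiv.swap_apply_right]
    exact ⟨fun h => ⟨h, h ▸ hinv v⟩, And.left⟩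
  · intro f hf
    exact mem_filter.mpr ⟨apply_mem_of_mem_matchingsOn hf hv, (mem_matchingsOn.mp hf).2.1 v hv⟩

lemma restrict_mem_matchingsOn (hg : g ∈ matchingsOn G S) (hDS : D ⊆ S) (hD : ∀ v ∈ D, g v ∈ D) :
    D.piecewise g id ∈ matchingsOn G D := by
  obtain ⟨hinv, hadj, -⟩ := mem_matchingsOn.mp hg
  refine mem_matchingsOn.mpr ⟨fun v => ?_, fun v hv => ?_, fun v hv => by simp [hv]⟩
  · by_cases hv : v ∈ D <;> simp [hv, hD, hinv v]
  · simpa [hv] using hadj v (hDS hv)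

omit [Fintype V] in
lemma forall_mem_union_image_eq_iff (hf : f.Involutive) (hg : g.Involutive) (A : Finset V) :
    (∀ v ∈ A ∪ A.image g, f v = g v) ↔ ∀ v ∈ A, f v = g v := by
  refine ⟨fun h v hv => h v (mem_union_left _ hv), fun h v hv => ?_⟩
  rcases mem_union.mp hv with hv | hv
  · exact h v hv
  · obtain ⟨u, hu, rfl⟩ := mem_image.mp hv
    rw [hg u, ← h u hu, hf u]

omit [Fintype V] in
lemma apply_mem_union_image (hg : g.Involutive) {A : Finset V} {v : V} (hv : v ∈ A ∪ A.image g) :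
    g v ∈ A ∪ A.image g := by
  rcases mem_union.mp hv with hv | hv
  · exact mem_union_right _ (mem_image_of_mem g hv)
  · obtain ⟨u, hu, rfl⟩ := mem_image.mp hv
    exact mem_union_left _ ((hg u).symm ▸ hu)

lemma card_filter_forall_mem_eq_compl (hg : g ∈ matchingsOn G univ) (A : Finset V) :
    #{f ∈ matchingsOn G univ | ∀ v ∈ A, f v = g v} = #(matchingsOn G (A ∪ A.image g)ᶜ) := by
  have hg_inv := (mem_matchingsOn_univ.mp hg).1
  rw [compl_eq_univ_sdiff, ← card_filter_forall_mem_eq (restrict_mem_matchingsOn hg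
    (subset_univ _) fun v => apply_mem_union_image hg_inv) (subset_univ _)]
  congr 1
  refine filter_congr fun f hf => ?_
  rw [← forall_mem_union_image_eq_iff (mem_matchingsOn_univ.mp hf).1 hg_inv]
  exact forall₂_congr fun v hv => by rw [piecewise_eq_of_mem _ _ _ hv]

-- Inclusion–exclusion over the edges of `g`, each represented by an endpoint in `T`.
lemma card_matchingsOn_avoiding (hg : g ∈ matchingsOn G univ) {T : Finset V}
    (hT : ∀ v, v ∈ T ∨ g v ∈ T) :
    (#{f ∈ matchingsOn G univ | ∀ v, f v ≠ g v} : ℤ) =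
      ∑ A ∈ T.powerset, (-1) ^ #A * (#(matchingsOn G (A ∪ A.image g)ᶜ) : ℤ) := by
  have hg_inv := (mem_matchingsOn_univ.mp hg).1
  let agree : V → Finset (V → V) := fun v => {f | f v = g v}
  have h_avoid : {f ∈ matchingsOn G univ | ∀ v, f v ≠ g v} =
      (T.inf fun v => (agree v)ᶜ) ∩ matchingsOn G univ := by
    ext f
    simp only [agree, mem_filter, mem_inter, mem_inf, mem_compl, mem_univ, true_and,
      and_comm (b := f ∈ _)]
    refine and_congr_right fun hf => ⟨fun h v _ => h v, fun h v hv => ?_⟩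
    have hf_inv := (mem_matchingsOn_univ.mp hf).1
    rcases hT v with hvT | hvT
    · exact h v hvT hv
    · exact h (g v) hvT (by rw [hg_inv v, ← hv, hf_inv v])
  have h_agree (A : Finset V) : A.inf agree ∩ matchingsOn G univ =
      {f ∈ matchingsOn G univ | ∀ v ∈ A, f v = g v} := by
    ext f
    simp [agree, mem_inf, and_comm]
  have h := inclusion_exclusion_sum_inf_compl T agree
    (fun f => if f ∈ matchingsOn G univ then (1 : ℤ) else 0)
  simp only [sum_ite_mem, sum_const, nsmul_eq_mul, mul_one, smul_eq_mul, h_agree,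
    card_filter_forall_mem_eq_compl hg] at h
  rw [h_avoid, h]

end Matchings

section PerfectMatching

variable {V : Type}

lemma exists_mem_matchingsOn_univ [Fintype V] [DecidableEq V] {G : SimpleGraph V} {M : G.Subgraph}
    (hM : M.IsPerfectMatching) :
    ∃ g ∈ matchingsOn G univ, ∀ v w, M.Adj v w ↔ g v = w := by
  choose g hadj huniq using Subgraph.isPerfectMatching_iff.mp hM
  refine ⟨g, mem_matchingsOn_univ.mpr
    ⟨fun v => (huniq (g v) v (hadj v).symm).symm, fun v => (hadj v).adj_sub⟩, fun v w => ?_⟩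
  exact ⟨fun h => (huniq v w h).symm, fun h => h ▸ hadj v⟩

lemma pmCount_eq_card_matchingsOn [Fintype V] [DecidableEq V] (G : SimpleGraph V) :
    pmCount G = #(matchingsOn G univ) := by
  rw [← Set.ncard_coe_finset]
  symm
  refine Set.ncard_congr (fun f hf =>
    { verts := Set.univ
      Adj := fun v w => f v = w
      adj_sub := fun {v w} h => h ▸ (mem_matchingsOn_univ.mp hf).2 v
      edge_vert := fun _ => Set.mem_univ _
      symm := ⟨fun v w h => h ▸ (mem_matchingsOn_univ.mp hf).1 v⟩ }) ?_ ?_ ?_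
  · intro f hf
    simp [Subgraph.isPerfectMatching_iff]
  · intro f f' hf hf' h
    have hadj : ∀ v w, f v = w ↔ f' v = w := fun v w =>
      iff_of_eq (congrFun₂ (congrArg Subgraph.Adj h) v w)
    exact funext fun v => ((hadj v _).mp rfl).symm
  · intro M hM
    obtain ⟨g, hg, hMg⟩ := exists_mem_matchingsOn_univ hM
    refine ⟨g, hg, Subgraph.ext ?_ ?_⟩
    · exact (Set.eq_univ_of_forall hM.2).symm
    · ext v w
      exact (hMg v w).symm

lemma pmCount_sdiff_spanningCoe [Fintype V] [DecidableEq V] {G : SimpleGraph V} {M : G.Subgraph}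
    {g : V → V} (hMg : ∀ v w, M.Adj v w ↔ g v = w) :
    pmCount (G \ M.spanningCoe) = #{f ∈ matchingsOn G univ | ∀ v, f v ≠ g v} := by
  rw [pmCount_eq_card_matchingsOn]
  congr 1
  ext f
  simp only [mem_matchingsOn_univ, mem_filter, sdiff_adj, Subgraph.spanningCoe_adj, hMg, forall_and,
    and_assoc, ne_comm, ne_eq]

end PerfectMatching

section Factorials

variable {ι : Type*} [Fintype ι] [DecidableEq ι]

lemma prod_factorial_add_single (f : ι → ℕ) (i : ι) :
    ∏ l, ((f + Pi.single i 1 : ι → ℕ) l)! = (f i + 1) * ∏ l, (f l)! := by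
  have hne : ∀ l ∈ ({i} : Finset ι)ᶜ, ((f + Pi.single i 1 : ι → ℕ) l)! = (f l)! := fun l hl => by
    simp [Pi.single_eq_of_ne (by simpa using hl : l ≠ i)]
  rw [Fintype.prod_eq_mul_prod_compl i, Fintype.prod_eq_mul_prod_compl i (fun l => (f l)!),
    prod_congr rfl hne, Pi.add_apply, Pi.single_eq_same, Nat.factorial_succ, mul_assoc]

lemma prod_prod_compl_singleton {R : Type*} [CommMonoid R] (y : ι → R) :
    ∏ i, ∏ l ∈ {i}ᶜ, y l = ∏ l, y l ^ (Fintype.card ι - 1) := by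
  rw [prod_comm' (s' := fun l => {l}ᶜ) (t' := univ) (by simp [eq_comm])]
  simp [card_compl]

lemma descFactorial_mul_descFactorial_le (m n a b : ℕ) :
    m.descFactorial a * n.descFactorial b ≤ (m + n).descFactorial (a + b) := by
  rcases lt_or_ge m a with h | h
  · simp [Nat.descFactorial_of_lt h]
  · rw [← Nat.descFactorial_mul_descFactorial (Nat.le_add_right a b), Nat.add_sub_cancel_left,
      mul_comm]
    gcongr <;> omega

omit [Fintype ι] [DecidableEq ι] in
lemma prod_descFactorial_le (s : Finset ι) (n a : ι → ℕ) :
    ∏ i ∈ s, (n i).descFactorial (a i) ≤ (∑ i ∈ s, n i).descFactorial (∑ i ∈ s, a i) := by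
  classical
  induction s using Finset.induction_on with
  | empty => simp
  | insert i s hi ih =>
    rw [prod_insert hi, sum_insert hi, sum_insert hi]
    exact (Nat.mul_le_mul_left _ ih).trans (descFactorial_mul_descFactorial_le _ _ _ _)

end Factorials

section PowersetSum

variable {α ι : Type*} [Fintype ι] [DecidableEq ι]

lemma card_filter_powerset_card_fiber_eq (T : Finset α) (t : α → ι) (a : ι → ℕ) :
    #{A ∈ T.powerset | (fun i => #{v ∈ A | t v = i}) = a} =
      ∏ i, (#{v ∈ T | t v = i}).choose (a i) := by
  classical
  simp_rw [← card_powersetCard]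
  rw [← Fintype.card_piFinset]
  have hfiber : ∀ B ∈ Fintype.piFinset fun i => powersetCard (a i) {v ∈ T | t v = i},
      ∀ i, {v ∈ univ.biUnion B | t v = i} = B i := by
    intro B hB i
    have hBt : ∀ j, ∀ v ∈ B j, t v = j := fun j v hv =>
      (mem_filter.mp ((mem_powersetCard.mp (Fintype.mem_piFinset.mp hB j)).1 hv)).2
    ext v
    simp only [mem_filter, mem_biUnion, mem_univ, true_and]
    exact ⟨fun ⟨⟨j, hj⟩, hv⟩ => hv ▸ (hBt j v hj).symm ▸ hj, fun hv => ⟨⟨i, hv⟩, hBt i v hv⟩⟩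
  refine card_nbij' (fun A i => {v ∈ A | t v = i}) (fun B => univ.biUnion B) ?_ ?_ ?_ ?_
  · intro A hA
    obtain ⟨hAT, rfl⟩ := mem_filter.mp hA
    exact Fintype.mem_piFinset.mpr fun i => mem_powersetCard.mpr
      ⟨filter_subset_filter _ (mem_powerset.mp hAT), rfl⟩
  · intro B hB
    refine mem_filter.mpr ⟨mem_powerset.mpr (biUnion_subset.mpr fun i _ => ?_), funext fun i => ?_⟩
    · exact (mem_powersetCard.mp (Fintype.mem_piFinset.mp hB i)).1.trans (filter_subset _ _)
    · rw [hfiber B hB i]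
      exact (mem_powersetCard.mp (Fintype.mem_piFinset.mp hB i)).2
  · intro A _
    exact biUnion_filter_eq_of_maps_to fun v _ => mem_univ (t v)
  · intro B hB
    exact funext (hfiber B hB)

lemma sum_powerset_card_fiber {M : Type*} [AddCommMonoid M] [TopologicalSpace M] (T : Finset α)
    (t : α → ι) (F : (ι → ℕ) → M) :
    ∑ A ∈ T.powerset, F (fun i => #{v ∈ A | t v = i}) =
      ∑' a : ι → ℕ, (∏ i, (#{v ∈ T | t v = i}).choose (a i)) • F a := by
  simp_rw [← card_filter_powerset_card_fiber_eq]
  rw [sum_comp F, tsum_eq_sum]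
  intro a ha
  rw [card_eq_zero.mpr, zero_smul]
  exact filter_eq_empty_iff.mpr fun A hA h => ha (mem_image.mpr ⟨A, hA, h⟩)

end PowersetSum

section PiTsum

variable {R β : Type*} [NormedCommRing R]

lemma summable_norm_fin_prod {n : ℕ} {f : Fin n → β → R} (hf : ∀ i, Summable fun b => ‖f i b‖) :
    Summable fun a : Fin n → β => ‖∏ i, f i (a i)‖ := by
  induction n with
  | zero => exact .of_finite
  | succ n ih =>
    rw [← (Fin.consEquiv fun _ => β).summable_iff]
    simpa [Function.comp_def, Fin.prod_univ_succ, Fin.consEquiv] using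
      (hf 0).mul_norm (ih fun i => hf i.succ)

lemma tsum_fin_prod [CompleteSpace R] {n : ℕ} {f : Fin n → β → R}
    (hf : ∀ i, Summable fun b => ‖f i b‖) :
    ∑' a : Fin n → β, ∏ i, f i (a i) = ∏ i, ∑' b, f i b := by
  induction n with
  | zero => simp
  | succ n ih =>
    rw [Fin.prod_univ_succ, ← ih fun i => hf i.succ, tsum_mul_tsum_of_summable_norm (hf 0)
      (summable_norm_fin_prod fun i => hf i.succ), ← (Fin.consEquiv fun _ => β).tsum_eq]
    simp [Fin.prod_univ_succ, Fin.consEquiv]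

end PiTsum

section Tripartite

variable {V : Type*}

/-- The complete tripartite graph whose classes are the fibres of `c`. -/
abbrev tripartiteGraph (c : V → Fin 3) : SimpleGraph V := (⊤ : SimpleGraph (Fin 3)).comap c

/-- The colour different from the two distinct colours `i` and `k`; the formula uses that the three
colours sum to `0` modulo `3`. -/
def thirdColor (i k : Fin 3) : Fin 3 := -(i + k)

/-- The number of edges between `v ∈ A` and `g v` that avoid the class of colour `i`. Edges of a
tripartite graph are thus sorted into types by the class they do not meet. -/
def edgeCount (c : V → Fin 3) (g : V → V) (A : Finset V) (i : Fin 3) : ℕ :=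
  #{v ∈ A | thirdColor (c v) (c (g v)) = i}

lemma sum_compl_thirdColor {M : Type*} [AddCommMonoid M] (x : Fin 3 → M) (k : Fin 3) :
    ∑ i ∈ {k}ᶜ, x (thirdColor k i) = ∑ j ∈ {k}ᶜ, x j := by
  refine sum_nbij' (thirdColor k) (thirdColor k) ?_ ?_ ?_ ?_ fun _ _ => rfl <;>
    · revert k; decide

lemma sum_compl_single_thirdColor {i k : Fin 3} (hik : k ≠ i) (l : Fin 3) :
    ∑ j ∈ {l}ᶜ, (Pi.single (thirdColor k i) 1 : Fin 3 → ℕ) j =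
      (Pi.single k 1 : Fin 3 → ℕ) l + (Pi.single i 1 : Fin 3 → ℕ) l := by
  revert i k l; decide

lemma ne_thirdColor {i k : Fin 3} (hik : k ≠ i) : k ≠ thirdColor k i := by
  revert i k; decide

lemma compl_singleton_eq_pair_thirdColor {i k : Fin 3} (hik : k ≠ i) :
    ({i}ᶜ : Finset (Fin 3)) = {k, thirdColor k i} := by
  revert i k; decide

variable [DecidableEq V] {c : V → Fin 3}

lemma card_filter_eq_sdiff_pair_add {S : Finset V} {v w : V} (hv : v ∈ S) (hw : w ∈ S)
    (hvw : v ≠ w) :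
    (fun l => #{u ∈ S | c u = l}) =
      (fun l => #{u ∈ S \ {v, w} | c u = l}) + Pi.single (c v) 1 + Pi.single (c w) 1 := by
  ext l
  simp only [card_filter, Pi.add_apply, Pi.single_apply, eq_comm (b := c _)]
  rw [← sum_sdiff (show {v, w} ⊆ S by simp [insert_subset_iff, hv, hw]), sum_pair hvw, add_assoc]

variable [Fintype V]

/-- The product formula for the number of perfect matchings on `S`: if the class sizes are those
produced by `x l` edges of each type `l`, there are `∏ (class size)! / ∏ (x l)!` matchings. -/
def MatchingFormula (c : V → Fin 3) (S : Finset V) : Prop :=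
  ∀ x : Fin 3 → ℕ, (∀ i, #{v ∈ S | c v = i} = ∑ l ∈ {i}ᶜ, x l) →
    #(matchingsOn (tripartiteGraph c) S) * ∏ i, (x i)! = ∏ i, (#{v ∈ S | c v = i})!

lemma card_matchingsOn_sdiff_pair_mul {S : Finset V} {v w : V} (hv : v ∈ S) (hw : w ∈ S)
    (hvw : c v ≠ c w) {x : Fin 3 → ℕ} (hx : ∀ i, #{u ∈ S | c u = i} = ∑ l ∈ {i}ᶜ, x l)
    (hpos : 0 < x (thirdColor (c v) (c w))) (ih : MatchingFormula c (S \ {v, w})) :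
    #{u ∈ S | c u = c v} * #{u ∈ S | c u = c w} *
        (#(matchingsOn (tripartiteGraph c) (S \ {v, w})) * ∏ i, (x i)!) =
      x (thirdColor (c v) (c w)) * ∏ i, (#{u ∈ S | c u = i})! := by
  have hsplit := card_filter_eq_sdiff_pair_add (c := c) hv hw (ne_of_apply_ne c hvw)
  set n : Fin 3 → ℕ := fun l => #{u ∈ S | c u = l}
  set n' : Fin 3 → ℕ := fun l => #{u ∈ S \ {v, w} | c u = l}
  set j := thirdColor (c v) (c w) with hj
  obtain ⟨y, rfl⟩ : ∃ y : Fin 3 → ℕ, x = y + Pi.single j 1 := by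
    refine ⟨x - Pi.single j 1, (tsub_add_cancel_of_le fun l => ?_).symm⟩
    obtain rfl | hl := eq_or_ne l j
    · simpa using Nat.succ_le_of_lt hpos
    · simp [hl]
  have hn' : ∀ i, n' i = ∑ l ∈ {i}ᶜ, y l := by
    intro i
    have hni : n i = ∑ l ∈ {i}ᶜ, y l + ∑ l ∈ {i}ᶜ, (Pi.single j 1 : Fin 3 → ℕ) l :=
      (hx i).trans sum_add_distrib
    have hsingle := sum_compl_single_thirdColor hvw i
    have hni' := congrFun hsplit i
    simp only [Pi.add_apply, ← hj] at hni' hsingle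
    omega
  have hnv : n (c v) = n' (c v) + 1 := by
    rw [hsplit]; simp [hvw]
  have hnw : n (c w) = (n' + Pi.single (c v) 1 : Fin 3 → ℕ) (c w) + 1 := by
    rw [hsplit]; simp
  have hn : ∏ i, (n i)! = n (c v) * n (c w) * ∏ i, (n' i)! := by
    rw [hnv, hnw, hsplit, prod_factorial_add_single, prod_factorial_add_single]
    ring
  rw [prod_factorial_add_single, hn, ← ih y hn', Pi.add_apply, Pi.single_eq_same]
  ring

-- When `v` lies in a largest class, an edge type at `v` with zero count in `x` does not occur.
lemma card_mul_sum_matchingsOn_sdiff_pair {S : Finset V} {v : V} (hv : v ∈ S) {i : Fin 3}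
    (hi : c v ≠ i) {x : Fin 3 → ℕ} (hx : ∀ i, #{u ∈ S | c u = i} = ∑ l ∈ {i}ᶜ, x l)
    (hmin : ∀ l, x (c v) ≤ x l) (ih : ∀ w ∈ S, MatchingFormula c (S \ {v, w})) :
    #{u ∈ S | c u = c v} *
        (∑ w ∈ S with c w = i, #(matchingsOn (tripartiteGraph c) (S \ {v, w})) * ∏ l, (x l)!) =
      x (thirdColor (c v) i) * ∏ l, (#{u ∈ S | c u = l})! := by
  have hni : #{u ∈ S | c u = i} = x (c v) + x (thirdColor (c v) i) := by
    rw [hx, compl_singleton_eq_pair_thirdColor hi, sum_pair (ne_thirdColor hi)]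
  obtain hzero | hpos := (x (thirdColor (c v) i)).eq_zero_or_pos
  · have hempty : #{u ∈ S | c u = i} = 0 := by
      have := hmin (thirdColor (c v) i)
      omega
    simp [card_eq_zero.mp hempty, hzero]
  · refine Nat.eq_of_mul_eq_mul_left (show 0 < #{u ∈ S | c u = i} by omega) ?_
    rw [← mul_assoc, mul_comm #_ #_, mul_sum, ← smul_eq_mul #{u ∈ S | c u = i} (_ * _)]
    refine sum_eq_card_nsmul fun w hw => ?_
    obtain ⟨hwS, rfl⟩ := mem_filter.mp hw
    exact card_matchingsOn_sdiff_pair_mul hv hwS hi hx hpos (ih w hwS)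

lemma card_matchingsOn_tripartiteGraph_eq_sum {S : Finset V} {v : V} (hv : v ∈ S) :
    #(matchingsOn (tripartiteGraph c) S) = ∑ i ∈ {c v}ᶜ, ∑ w ∈ S with c w = i,
      #(matchingsOn (tripartiteGraph c) (S \ {v, w})) := by
  rw [card_matchingsOn_eq_sum hv, ← sum_fiberwise_of_maps_to (g := c) (t := {c v}ᶜ)]
  · refine sum_congr rfl fun i hi => sum_congr ?_ fun _ _ => rfl
    rw [filter_filter]
    refine filter_congr fun w _ => and_iff_right_of_imp ?_
    rintro rfl
    simpa [eq_comm] using hi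
  · intro w hw
    simpa [eq_comm] using (mem_filter.mp hw).2

theorem matchingFormula (c : V → Fin 3) (S : Finset V) : MatchingFormula c S := by
  induction S using Finset.strongInduction with
  | H S ih =>
    intro x hx
    obtain ⟨k, hmin⟩ := Finite.exists_min x
    obtain hk | hk := (#{v ∈ S | c v = k}).eq_zero_or_pos
    · have hx0 : x = 0 := by
        have hne : ∀ l ≠ k, x l = 0 := fun l hl =>
          sum_eq_zero_iff.mp ((hx k).symm.trans hk) l (by simpa using hl)
        have hkk := (hmin (k + 1)).trans_eq (hne (k + 1) (by simp))
        funext l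
        obtain rfl | hl := eq_or_ne l k
        exacts [Nat.le_zero.mp hkk, hne l hl]
      have hS : S = ∅ := eq_empty_of_forall_notMem fun v hv => by
        have : #{u ∈ S | c u = c v} = 0 := by simp [hx, hx0]
        exact notMem_empty v (card_eq_zero.mp this ▸ mem_filter.mpr ⟨hv, rfl⟩)
      simp [hS, hx0, matchingsOn_empty]
    · obtain ⟨v, hv⟩ := card_pos.mp hk
      obtain ⟨hvS, rfl⟩ := mem_filter.mp hv
      have ih' : ∀ w ∈ S, MatchingFormula c (S \ {v, w}) := fun w hw =>
        ih _ (sdiff_ssubset (by simp [insert_subset_iff, hvS, hw]) (insert_nonempty _ _))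
      refine Nat.eq_of_mul_eq_mul_left hk ?_
      rw [card_matchingsOn_tripartiteGraph_eq_sum hvS, sum_mul, mul_sum]
      simp_rw [sum_mul]
      rw [sum_congr rfl fun i hi => card_mul_sum_matchingsOn_sdiff_pair hvS
        (by simpa [eq_comm] using hi) hx hmin ih', ← sum_mul, sum_compl_thirdColor, ← hx]


/-- One endpoint of each edge of the matching `g`: the one with the smaller colour. -/
def lowerEnds (c : V → Fin 3) (g : V → V) : Finset V := {v | c v < c (g v)}

variable {g : V → V}

omit [DecidableEq V] in
lemma mem_lowerEnds {v : V} : v ∈ lowerEnds c g ↔ c v < c (g v) := by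
  simp [lowerEnds]

lemma mem_lowerEnds_or_apply_mem (hg : g ∈ matchingsOn (tripartiteGraph c) univ) (v : V) :
    v ∈ lowerEnds c g ∨ g v ∈ lowerEnds c g := by
  obtain ⟨hinv, hadj⟩ := mem_matchingsOn_univ.mp hg
  simpa [mem_lowerEnds, hinv v] using lt_or_gt_of_ne (hadj v)

lemma disjoint_image_of_subset_lowerEnds (hg : g.Involutive) {A : Finset V}
    (hA : A ⊆ lowerEnds c g) : Disjoint A (A.image g) := by
  refine disjoint_right.mpr fun w hw hwA => ?_
  obtain ⟨v, hv, rfl⟩ := mem_image.mp hw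
  have hlt := mem_lowerEnds.mp (hA hwA)
  rw [hg v] at hlt
  exact hlt.asymm (mem_lowerEnds.mp (hA hv))

lemma indicator_add_indicator_eq_sum_compl {p q : Fin 3} (hpq : p ≠ q) (i : Fin 3) :
    (if p = i then 1 else 0) + (if q = i then 1 else 0) =
      ∑ l ∈ {i}ᶜ, if thirdColor p q = l then 1 else 0 := by
  revert p q i; decide

lemma card_filter_union_image (hg : g ∈ matchingsOn (tripartiteGraph c) univ) {A : Finset V}
    (hA : A ⊆ lowerEnds c g) (i : Fin 3) :
    #{v ∈ A ∪ A.image g | c v = i} = ∑ l ∈ {i}ᶜ, edgeCount c g A l := by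
  obtain ⟨hinv, hadj⟩ := mem_matchingsOn_univ.mp hg
  simp only [edgeCount, card_filter]
  rw [sum_union (disjoint_image_of_subset_lowerEnds hinv hA), sum_image hinv.injective.injOn,
    ← sum_add_distrib, sum_comm]
  exact sum_congr rfl fun v _ => indicator_add_indicator_eq_sum_compl (hadj v) i

lemma lowerEnds_union_image (hg : g ∈ matchingsOn (tripartiteGraph c) univ) :
    lowerEnds c g ∪ (lowerEnds c g).image g = univ := by
  refine eq_univ_of_forall fun v => mem_union.mpr ((mem_lowerEnds_or_apply_mem hg v).imp_right
    fun hv => mem_image.mpr ⟨g v, hv, (mem_matchingsOn_univ.mp hg).1 v⟩)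

lemma card_class_eq_sum_edgeCount (hg : g ∈ matchingsOn (tripartiteGraph c) univ) (i : Fin 3) :
    #{v | c v = i} = ∑ l ∈ {i}ᶜ, edgeCount c g (lowerEnds c g) l := by
  rw [← card_filter_union_image hg subset_rfl, lowerEnds_union_image hg]

lemma edgeCount_lowerEnds_of_balanced (hg : g ∈ matchingsOn (tripartiteGraph c) univ) {m : ℕ}
    (hc : ∀ i, #{v | c v = i} = 2 * m) : edgeCount c g (lowerEnds c g) = fun _ => m := by
  have hsum := fun i => (hc i).symm.trans (card_class_eq_sum_edgeCount hg i)
  have h_all := fun i => Fintype.sum_eq_add_sum_compl i (edgeCount c g (lowerEnds c g))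
  have := Fin.sum_univ_three (edgeCount c g (lowerEnds c g))
  funext i
  fin_cases i <;> grind

omit [DecidableEq V] [Fintype V] in
lemma edgeCount_mono {A B : Finset V} (h : A ⊆ B) : edgeCount c g A ≤ edgeCount c g B :=
  fun _ => card_le_card (filter_subset_filter _ h)

lemma card_filter_compl_union_image (hg : g ∈ matchingsOn (tripartiteGraph c) univ) {A : Finset V}
    (hA : A ⊆ lowerEnds c g) (i : Fin 3) :
    #{v ∈ (A ∪ A.image g)ᶜ | c v = i} =
      ∑ l ∈ {i}ᶜ, (edgeCount c g (lowerEnds c g) l - edgeCount c g A l) := by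
  rw [sum_tsub_distrib _ fun l _ => edgeCount_mono hA l, ← card_class_eq_sum_edgeCount hg,
    ← card_filter_union_image hg hA,
    ← card_sdiff_of_subset (filter_subset_filter _ (subset_univ _))]
  congr 1
  ext v
  simp only [mem_filter, mem_compl, mem_univ, Finset.mem_sdiff]
  tauto

lemma card_matchingsOn_compl_mul (hg : g ∈ matchingsOn (tripartiteGraph c) univ) {A : Finset V}
    (hA : A ⊆ lowerEnds c g) :
    #(matchingsOn (tripartiteGraph c) (A ∪ A.image g)ᶜ) *
        ∏ i, (∑ l ∈ {i}ᶜ, edgeCount c g (lowerEnds c g) l).descFactorial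
          (∑ l ∈ {i}ᶜ, edgeCount c g A l) =
      #(matchingsOn (tripartiteGraph c) univ) *
        ∏ i, (edgeCount c g (lowerEnds c g) i).descFactorial (edgeCount c g A i) := by
  have hle := edgeCount_mono (c := c) (g := g) hA
  have h_all := matchingFormula c univ _ (card_class_eq_sum_edgeCount hg)
  have h_rest := matchingFormula c _ _ (card_filter_compl_union_image hg hA)
  simp only [card_class_eq_sum_edgeCount hg, card_filter_compl_union_image hg hA] at h_all h_rest
  set t := edgeCount c g (lowerEnds c g)
  set a := edgeCount c g A
  have ht : ∏ i, (t i)! = (∏ i, (t i - a i)!) * ∏ i, (t i).descFactorial (a i) := by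
    rw [← prod_mul_distrib]
    exact prod_congr rfl fun i _ => (Nat.factorial_mul_descFactorial (hle i)).symm
  have hsum : ∏ i, (∑ l ∈ {i}ᶜ, t l)! = (∏ i, (∑ l ∈ {i}ᶜ, (t l - a l))!) *
      ∏ i, (∑ l ∈ {i}ᶜ, t l).descFactorial (∑ l ∈ {i}ᶜ, a l) := by
    rw [← prod_mul_distrib]
    refine prod_congr rfl fun i _ => ?_
    rw [sum_tsub_distrib _ fun l _ => hle l,
      Nat.factorial_mul_descFactorial (sum_le_sum fun l _ => hle l)]
  refine Nat.eq_of_mul_eq_mul_right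
    (prod_pos fun i _ => Nat.factorial_pos (t i - a i) : 0 < ∏ i, (t i - a i)!) ?_
  rw [mul_right_comm, h_rest, ← hsum, ← h_all, ht]
  ring

lemma sign_mul_card_matchingsOn_compl_div (hg : g ∈ matchingsOn (tripartiteGraph c) univ)
    {A : Finset V} (hA : A ⊆ lowerEnds c g) :
    (-1 : ℝ) ^ #A * #(matchingsOn (tripartiteGraph c) (A ∪ A.image g)ᶜ) /
        #(matchingsOn (tripartiteGraph c) univ) =
      ∏ i, (-1 : ℝ) ^ edgeCount c g A i *
        (edgeCount c g (lowerEnds c g) i).descFactorial (edgeCount c g A i) /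
          (∑ l ∈ {i}ᶜ, edgeCount c g (lowerEnds c g) l).descFactorial
            (∑ l ∈ {i}ᶜ, edgeCount c g A l) := by
  have hN : (#(matchingsOn (tripartiteGraph c) univ) : ℝ) ≠ 0 :=
    Nat.cast_ne_zero.mpr (card_ne_zero_of_mem hg)
  have hsign : (-1 : ℝ) ^ #A = ∏ i, (-1 : ℝ) ^ edgeCount c g A i := by
    rw [prod_pow_eq_pow_sum]
    congr 1
    exact card_eq_sum_card_fiberwise fun v _ => mem_univ _
  have hpos : ∏ i, ((∑ l ∈ {i}ᶜ, edgeCount c g (lowerEnds c g) l).descFactorial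
      (∑ l ∈ {i}ᶜ, edgeCount c g A l) : ℝ) ≠ 0 :=
    prod_ne_zero_iff.mpr fun i _ => Nat.cast_ne_zero.mpr
      (Nat.descFactorial_pos.mpr (sum_le_sum fun l _ => edgeCount_mono hA l)).ne'
  have hcount := congrArg (Nat.cast (R := ℝ)) (card_matchingsOn_compl_mul hg hA)
  push_cast at hcount
  rw [prod_div_distrib, prod_mul_distrib, ← hsign, div_eq_div_iff hN hpos, mul_assoc, hcount]
  ring

/-- The total contribution, in inclusion–exclusion over the edges of a matching with `t i` edges of
each type `i`, of the edge sets with `a i` members of each type `i` to the probability that a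
uniform perfect matching avoids all these edges. It vanishes unless `a ≤ t`. -/
noncomputable def avoidTerm (t a : Fin 3 → ℕ) : ℝ :=
  ∏ i, (-1 : ℝ) ^ a i * (t i).choose (a i) * (t i).descFactorial (a i) /
    (∑ l ∈ {i}ᶜ, t l).descFactorial (∑ l ∈ {i}ᶜ, a l)

lemma card_avoiding_div_card (hg : g ∈ matchingsOn (tripartiteGraph c) univ) :
    (#{f ∈ matchingsOn (tripartiteGraph c) univ | ∀ v, f v ≠ g v} : ℝ) /
        #(matchingsOn (tripartiteGraph c) univ) =
      ∑' a, avoidTerm (edgeCount c g (lowerEnds c g)) a := by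
  have h := congrArg (Int.cast (R := ℝ))
    (card_matchingsOn_avoiding hg (mem_lowerEnds_or_apply_mem hg))
  push_cast at h
  rw [h, sum_div, sum_congr rfl fun A hA =>
    sign_mul_card_matchingsOn_compl_div hg (mem_powerset.mp hA)]
  refine (sum_powerset_card_fiber (lowerEnds c g) (fun v => thirdColor (c v) (c (g v)))
    (fun a => ∏ i, (-1 : ℝ) ^ a i * (edgeCount c g (lowerEnds c g) i).descFactorial (a i) /
      (∑ l ∈ {i}ᶜ, edgeCount c g (lowerEnds c g) l).descFactorial (∑ l ∈ {i}ᶜ, a l))).trans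
    (tsum_congr fun a => ?_)
  rw [nsmul_eq_mul, Nat.cast_prod, ← prod_mul_distrib]
  exact prod_congr rfl fun i _ => by simp only [edgeCount]; ring

end Tripartite

section Asymptotics

open Asymptotics

lemma norm_avoidTerm_le (t a : Fin 3 → ℕ) : ‖avoidTerm t a‖ ≤ ∏ i, (1 : ℝ) / (a i)! := by
  have hle : ∏ i, (t i).descFactorial (a i) ^ 2 ≤
      ∏ i, (∑ l ∈ {i}ᶜ, t l).descFactorial (∑ l ∈ {i}ᶜ, a l) :=
    (prod_prod_compl_singleton fun i => (t i).descFactorial (a i)).symm.trans_le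
      (prod_le_prod' fun i _ => prod_descFactorial_le _ t a)
  have hchoose (i : Fin 3) : ((t i).choose (a i) : ℝ) = (t i).descFactorial (a i) / (a i)! := by
    rw [Nat.descFactorial_eq_factorial_mul_choose]
    field_simp
    push_cast
    ring
  calc ‖avoidTerm t a‖
      = (∏ i, ((t i).descFactorial (a i) : ℝ) ^ 2) /
          (∏ i, ((∑ l ∈ {i}ᶜ, t l).descFactorial (∑ l ∈ {i}ᶜ, a l) : ℝ)) *
            ∏ i, (1 : ℝ) / (a i)! := by
        rw [avoidTerm, norm_prod, ← prod_div_distrib, ← prod_mul_distrib]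
        refine prod_congr rfl fun i _ => ?_
        simp only [norm_div, norm_mul, norm_pow, norm_neg, norm_one, one_pow, one_mul,
          RCLike.norm_natCast, hchoose]
        ring
    _ ≤ ∏ i, (1 : ℝ) / (a i)! := by
        refine mul_le_of_le_one_left (by positivity) (div_le_one_of_le₀ ?_ (by positivity))
        exact_mod_cast hle

lemma tendsto_avoidTerm_const (a : Fin 3 → ℕ) :
    Tendsto (fun m : ℕ => avoidTerm (fun _ => m) a) atTop
      (𝓝 (∏ i, (-1 / 4 : ℝ) ^ a i / (a i)!)) := by
  have h_equiv : (fun m : ℕ => avoidTerm (fun _ => m) a) ~[atTop] fun m : ℕ =>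
      ∏ i, (-1 : ℝ) ^ a i * (m ^ a i / (a i)!) * m ^ a i / (2 * m : ℕ) ^ ∑ l ∈ {i}ᶜ, a l := by
    simp only [avoidTerm, sum_const, card_compl, Fintype.card_fin, card_singleton, smul_eq_mul]
    exact .finsetProd fun i _ =>
      ((IsEquivalent.refl.mul (isEquivalent_choose _)).mul (isEquivalent_descFactorial _)).div
        ((isEquivalent_descFactorial _).comp_tendsto (tendsto_id.const_mul_atTop' two_pos))
  refine h_equiv.symm.tendsto_nhds (tendsto_const_nhds.congr' ?_)
  filter_upwards [eventually_gt_atTop 0] with m hm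
  have h_pow : ∏ i, ((2 * m : ℕ) : ℝ) ^ ∑ l ∈ {i}ᶜ, a l =
      ∏ i, (((2 * m : ℕ) : ℝ) ^ a i) ^ 2 := by
    simp_rw [← prod_pow_eq_pow_sum]
    exact prod_prod_compl_singleton fun i => ((2 * m : ℕ) : ℝ) ^ a i
  rw [prod_div_distrib (g := fun i => _ ^ ∑ l ∈ {i}ᶜ, a l), h_pow, ← prod_div_distrib]
  refine prod_congr rfl fun i _ => ?_
  have h_base : (-1 / 4 : ℝ) = -1 * m * m / (2 * m : ℕ) ^ 2 := by
    push_cast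
    field_simp
    norm_num
  rw [h_base]
  ring

lemma tendsto_tsum_avoidTerm_const :
    Tendsto (fun m : ℕ => ∑' a, avoidTerm (fun _ => m) a) atTop (𝓝 (Real.exp (-3 / 4))) := by
  have hsum (x : ℝ) : Summable fun n : ℕ => ‖x ^ n / (n)!‖ :=
    (Real.summable_pow_div_factorial x).norm
  have hlim : ∑' a : Fin 3 → ℕ, ∏ i, (-1 / 4 : ℝ) ^ a i / (a i)! = Real.exp (-3 / 4) := by
    rw [tsum_fin_prod (f := fun _ n => (-1 / 4 : ℝ) ^ n / (n)!) fun _ => hsum _,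
      (NormedSpace.expSeries_div_hasSum_exp (-1 / 4 : ℝ)).tsum_eq, ← Real.exp_eq_exp_ℝ, prod_const,
      ← Real.exp_nat_mul]
    norm_num
  rw [← hlim]
  refine tendsto_tsum_of_dominated_convergence (bound := fun a => ∏ i, (1 : ℝ) / (a i)!) ?_
    tendsto_avoidTerm_const (.of_forall fun m a => norm_avoidTerm_le _ a)
  simpa using summable_norm_fin_prod (n := 3) (f := fun _ n => (1 : ℝ) ^ n / (n)!) fun _ => hsum 1

end Asymptotics

lemma card_filter_fst_eq {ι : Type*} [Fintype ι] [DecidableEq ι] {α : ι → Type*}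
    [∀ i, Fintype (α i)] (i : ι) : #{v : Σ j, α j | v.1 = i} = Fintype.card (α i) := by
  simp only [card_filter]
  rw [Fintype.sum_sigma, sum_eq_single i]
  · simp
  · intro j _ hj
    simp [hj]
  · simp

/-- For any sequence of perfect matchings `M m` of `K_{2m,2m,2m}`, the proportion of
perfect matchings avoiding `M m` tends to `e^{-3/4}` as `m → ∞`. -/
theorem stmt_11
    (M : ∀ m : ℕ, (completeMultipartiteGraph (fun _ : Fin 3 => Fin (2 * m))).Subgraph)
    (hM : ∀ m, (M m).IsPerfectMatching) :
    Tendsto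
      (fun m : ℕ =>
        (pmCount (completeMultipartiteGraph (fun _ : Fin 3 => Fin (2 * m)) \
            (M m).spanningCoe) : ℝ) /
          (pmCount (completeMultipartiteGraph (fun _ : Fin 3 => Fin (2 * m))) : ℝ))
      atTop (𝓝 (Real.exp (-3 / 4))) := by
  refine tendsto_tsum_avoidTerm_const.congr fun m => ?_
  obtain ⟨g, hg, hMg⟩ := exists_mem_matchingsOn_univ (hM m)
  have h_types := edgeCount_lowerEnds_of_balanced (c := Sigma.fst) hg
    fun i => (card_filter_fst_eq i).trans (Fintype.card_fin _)
  rw [pmCount_sdiff_spanningCoe hMg, pmCount_eq_card_matchingsOn,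
    ← h_types, ← card_avoiding_div_card hg]
end

section
/- Let d be a fixed nonnegative integer and (G_{2n}) a sequence of (2n-d-1)-regular graphs on 2n vertices. Then pm(G_{2n}) / pm(K_{2n}) → e^{-d/2} as n → ∞. -/
open SimpleGraph Filter Topology

/-!
Let `H` be the complement of `G`, on `m` vertices, and let `X` be the number of edges of `H` in a
uniformly random perfect matching of the complete graph. A `k`-edge matching extends to
`(m - 2k - 1)‼` perfect matchings, so the binomial moment `E[X choose k]` is
`m_k(H) (m - 2k - 1)‼ / (m - 1)‼`, where `m_k(H)` counts the `k`-edge matchings of `H`. If `H` has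
about `cm` edges and maximum degree `o(m)`, then choosing edges one at a time gives
`m_k(H) ~ (cm)^k / k!`, so the moments tend to the Poisson values `c^k / k!`. They are dominated by
`(2e |E(H)| / m)^k / k!`, which allows passing to the limit in the inclusion–exclusion formula
`P(X = 0) = ∑ (-1)^k E[X choose k]`, with limit `e^{-c}`. For `d`-regular `H`, `c = d / 2`.
-/

section Matchings

open Finset
open scoped Nat

section CoveredVerts

variable {V : Type*} [DecidableEq V] {A : Finset (Sym2 V)}

/-- The set of vertices incident to an edge of `A`. -/
def coveredVerts (A : Finset (Sym2 V)) : Finset V := A.biUnion Sym2.toFinset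

theorem mem_coveredVerts {v : V} : v ∈ coveredVerts A ↔ ∃ e ∈ A, v ∈ e := by
  simp only [coveredVerts, mem_biUnion, Sym2.mem_toFinset]

theorem notMem_of_disjoint_coveredVerts {e : Sym2 V}
    (he : Disjoint e.toFinset (coveredVerts A)) : e ∉ A := fun heA =>
  e.toFinset_ne_empty (disjoint_self.1 (he.mono_right (subset_biUnion_of_mem _ heA)))

end CoveredVerts

variable {V : Type*} [Fintype V] [DecidableEq V] {H : SimpleGraph V} [DecidableRel H.Adj]
  {k n : ℕ} {A M : Finset (Sym2 V)}

variable (H) in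
open Classical in
/-- The `k`-edge matchings of `H`, each encoded as its set of edges. -/
noncomputable def kMatchings (k : ℕ) : Finset (Finset (Sym2 V)) :=
  {M ∈ H.edgeFinset.powersetCard k | (M : Set (Sym2 V)).PairwiseDisjoint Sym2.toFinset}

theorem mem_kMatchings : M ∈ kMatchings H k ↔
    M ⊆ H.edgeFinset ∧ #M = k ∧ (M : Set (Sym2 V)).PairwiseDisjoint Sym2.toFinset := by
  classical rw [kMatchings, mem_filter, mem_powersetCard, and_assoc]

theorem kMatchings_zero : kMatchings H 0 = {∅} := by
  ext M
  rw [mem_kMatchings, card_eq_zero, mem_singleton]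
  exact ⟨fun hM => hM.2.1, by rintro rfl; simp⟩

theorem kMatchings_mono {K : SimpleGraph V} [DecidableRel K.Adj] (hHK : H ≤ K) (k : ℕ) :
    kMatchings H k ⊆ kMatchings K k := fun _ hM =>
  have ⟨hMH, hcard_disj⟩ := mem_kMatchings.1 hM
  mem_kMatchings.2 ⟨hMH.trans (edgeFinset_subset_edgeFinset.2 hHK), hcard_disj⟩

theorem eq_of_mem_kMatchings (hM : M ∈ kMatchings H k) {e f : Sym2 V} (he : e ∈ M) (hf : f ∈ M)
    {v : V} (hve : v ∈ e) (hvf : v ∈ f) : e = f :=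
  (mem_kMatchings.1 hM).2.2.elim_finset he hf v (Sym2.mem_toFinset.2 hve) (Sym2.mem_toFinset.2 hvf)

theorem card_coveredVerts (hM : M ∈ kMatchings H k) : #(coveredVerts M) = 2 * k := by
  obtain ⟨hMH, rfl, hdisj⟩ := mem_kMatchings.1 hM
  rw [coveredVerts, card_biUnion hdisj, sum_const_nat, mul_comm]
  exact fun e he => e.card_toFinset_of_not_isDiag (H.not_isDiag_of_mem_edgeFinset (hMH he))

theorem two_mul_le_card_of_mem_kMatchings (hM : M ∈ kMatchings H k) :
    2 * k ≤ Fintype.card V :=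
  (card_coveredVerts hM).symm.trans_le (card_le_univ _)

theorem coveredVerts_eq_univ (hV : Fintype.card V = 2 * n) (hM : M ∈ kMatchings H n) :
    coveredVerts M = univ :=
  (card_eq_iff_eq_univ _).1 ((card_coveredVerts hM).trans hV.symm)

theorem insert_mem_kMatchings (hA : A ∈ kMatchings H k) {e : Sym2 V} (he : e ∈ H.edgeFinset)
    (hdisj : Disjoint e.toFinset (coveredVerts A)) : insert e A ∈ kMatchings H (k + 1) := by
  obtain ⟨hAH, rfl, hAdisj⟩ := mem_kMatchings.1 hA
  refine mem_kMatchings.2 ⟨insert_subset he hAH,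
    card_insert_of_notMem (notMem_of_disjoint_coveredVerts hdisj), ?_⟩
  rw [coe_insert]
  exact hAdisj.insert fun f hf _ => hdisj.mono_right (subset_biUnion_of_mem _ hf)

theorem disjoint_coveredVerts_of_insert_mem_kMatchings {e : Sym2 V} (he : e ∉ A)
    (hA : insert e A ∈ kMatchings H k) : Disjoint e.toFinset (coveredVerts A) := by
  rw [coveredVerts, disjoint_biUnion_right]
  exact fun f hf => (mem_kMatchings.1 hA).2.2 (mem_insert_self e A) (mem_insert_of_mem hf)
    (ne_of_mem_of_not_mem hf he).symm

variable (H) in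
/-- The edges of `H` that can be added to the matching `A`, being disjoint from all its edges. -/
def extendingEdges (A : Finset (Sym2 V)) : Finset (Sym2 V) :=
  {e ∈ H.edgeFinset | Disjoint e.toFinset (coveredVerts A)}

theorem card_edgeFinset_le_card_extendingEdges_add (hA : A ∈ kMatchings H k) :
    #H.edgeFinset ≤ #(extendingEdges H A) + 2 * k * H.maxDegree := by
  have hcover : H.edgeFinset ⊆
      extendingEdges H A ∪ (coveredVerts A).biUnion (H.incidenceFinset ·) := by
    intro e he
    by_cases hdisj : Disjoint e.toFinset (coveredVerts A)
    · exact mem_union_left _ (mem_filter.2 ⟨he, hdisj⟩)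
    · obtain ⟨v, hve, hvA⟩ := not_disjoint_iff.1 hdisj
      exact mem_union_right _ (mem_biUnion.2 ⟨v, hvA, (H.mem_incidenceFinset v e).2
        ⟨mem_edgeFinset.1 he, Sym2.mem_toFinset.1 hve⟩⟩)
  have hincident : #((coveredVerts A).biUnion (H.incidenceFinset ·)) ≤ 2 * k * H.maxDegree := by
    rw [← card_coveredVerts hA]
    exact card_biUnion_le_card_mul _ _ _ fun v _ =>
      (H.card_incidenceFinset_eq_degree v).trans_le (H.degree_le_maxDegree v)
  calc #H.edgeFinset ≤ _ := (card_le_card hcover).trans (card_union_le _ _)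
    _ ≤ _ := by gcongr

theorem card_filter_subset_kMatchings_succ (hA : A ∈ kMatchings H k) :
    #{B ∈ kMatchings H (k + 1) | A ⊆ B} = #(extendingEdges H A) := by
  have himage : {B ∈ kMatchings H (k + 1) | A ⊆ B} =
      (extendingEdges H A).image (insert · A) := by
    ext B
    simp only [mem_filter, mem_image, extendingEdges]
    constructor
    · rintro ⟨hB, hAB⟩
      obtain ⟨e, he, rfl⟩ : ∃ e ∉ A, insert e A = B :=
        exists_eq_insert_iff.2 ⟨hAB, by rw [(mem_kMatchings.1 hA).2.1, (mem_kMatchings.1 hB).2.1]⟩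
      exact ⟨e, ⟨(mem_kMatchings.1 hB).1 (mem_insert_self e A),
        disjoint_coveredVerts_of_insert_mem_kMatchings he hB⟩, rfl⟩
    · rintro ⟨e, ⟨heH, hdisj⟩, rfl⟩
      exact ⟨insert_mem_kMatchings hA heH hdisj, subset_insert e A⟩
  rw [himage, card_image_of_injOn]
  intro e he f _ hef
  have hmem : e ∈ insert f A := hef.subset (mem_insert_self e A)
  exact (mem_insert.1 hmem).resolve_right (notMem_of_disjoint_coveredVerts (mem_filter.1 he).2)

variable (H k) in
theorem card_filter_subset_kMatchings {K : SimpleGraph V} [DecidableRel K.Adj]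
    (hM : M ∈ kMatchings K n) :
    #{A ∈ kMatchings H k | A ⊆ M} = (#(M ∩ H.edgeFinset)).choose k := by
  rw [← card_powersetCard]
  congr 1
  ext A
  rw [mem_filter, mem_powersetCard, subset_inter_iff, mem_kMatchings]
  exact ⟨fun ⟨⟨hAH, hA, _⟩, hAM⟩ => ⟨⟨hAM, hAH⟩, hA⟩, fun ⟨⟨hAM, hAH⟩, hA⟩ =>
    ⟨⟨hAH, hA, (mem_kMatchings.1 hM).2.2.subset (coe_subset.2 hAM)⟩, hAM⟩⟩

variable (H k) in
theorem succ_mul_card_kMatchings_succ :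
    (k + 1) * #(kMatchings H (k + 1)) = ∑ A ∈ kMatchings H k, #(extendingEdges H A) := by
  have hsubmatchings : ∀ B ∈ kMatchings H (k + 1), #{A ∈ kMatchings H k | A ⊆ B} = k + 1 := by
    intro B hB
    obtain ⟨hBH, hcard, _⟩ := mem_kMatchings.1 hB
    rw [card_filter_subset_kMatchings H k hB, inter_eq_left.2 hBH, hcard,
      Nat.choose_succ_self_right]
  rw [sum_congr rfl fun A hA => (card_filter_subset_kMatchings_succ hA).symm,
    mul_comm, ← sum_const_nat hsubmatchings]
  exact (sum_card_bipartiteAbove_eq_sum_card_bipartiteBelow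
    (r := fun A B : Finset (Sym2 V) => A ⊆ B)).symm

variable (H k) in
theorem succ_mul_card_kMatchings_succ_le :
    (k + 1) * #(kMatchings H (k + 1)) ≤ #(kMatchings H k) * #H.edgeFinset := by
  rw [succ_mul_card_kMatchings_succ]
  exact sum_le_card_nsmul _ _ _ fun A _ => card_filter_le _ _

variable (H k) in
theorem card_kMatchings_mul_card_edgeFinset_le :
    #(kMatchings H k) * #H.edgeFinset ≤
      (k + 1) * #(kMatchings H (k + 1)) + #(kMatchings H k) * (2 * k * H.maxDegree) := by
  rw [succ_mul_card_kMatchings_succ, ← smul_eq_mul (#(kMatchings H k)),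
    ← smul_eq_mul (#(kMatchings H k)), ← sum_const, ← sum_const, ← sum_add_distrib]
  exact sum_le_sum fun A hA => card_edgeFinset_le_card_extendingEdges_add hA

variable (H k) in
theorem card_kMatchings_le_choose : #(kMatchings H k) ≤ (#H.edgeFinset).choose k :=
  have hsubset : kMatchings H k ⊆ H.edgeFinset.powersetCard k := fun _ hM =>
    have ⟨hMH, hcard, _⟩ := mem_kMatchings.1 hM
    mem_powersetCard.2 ⟨hMH, hcard⟩
  (card_le_card hsubset).trans_eq (card_powersetCard _ _)

theorem exists_mk_mem_of_notMem_coveredVerts {v : V} (hM : M ∈ kMatchings H k) (hAM : A ⊆ M)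
    (hvA : v ∉ coveredVerts A) (hvM : v ∈ coveredVerts M) :
    ∃ w ∈ (coveredVerts A)ᶜ.erase v, s(v, w) ∈ M := by
  obtain ⟨_, heM, w, rfl⟩ := mem_coveredVerts.1 hvM
  have hloop : v ≠ w := H.ne_of_adj (mem_edgeFinset.1 ((mem_kMatchings.1 hM).1 heM))
  refine ⟨w, mem_erase.2 ⟨hloop.symm, mem_compl.2 fun hwA => hvA ?_⟩, heM⟩
  obtain ⟨f, hfA, hwf⟩ := mem_coveredVerts.1 hwA
  obtain rfl := eq_of_mem_kMatchings hM heM (hAM hfA) (Sym2.mem_mk_right v w) hwf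
  exact mem_coveredVerts.2 ⟨_, hfA, Sym2.mem_mk_left v w⟩

theorem card_filter_subset_kMatchings_eq_sum (hV : Fintype.card V = 2 * n) {v : V}
    (hv : v ∉ coveredVerts A) :
    #{M ∈ kMatchings H n | A ⊆ M} =
      ∑ w ∈ (coveredVerts A)ᶜ.erase v, #{M ∈ kMatchings H n | insert s(v, w) A ⊆ M} := by
  rw [← card_biUnion]
  · congr 1
    ext M
    simp only [mem_filter, mem_biUnion, insert_subset_iff]
    constructor
    · rintro ⟨hM, hAM⟩
      obtain ⟨w, hw, hvw⟩ := exists_mk_mem_of_notMem_coveredVerts hM hAM hv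
        (coveredVerts_eq_univ hV hM ▸ mem_univ v)
      exact ⟨w, hw, hM, hvw, hAM⟩
    · rintro ⟨_, _, hM, _, hAM⟩
      exact ⟨hM, hAM⟩
  · intro u _ w _ huw
    refine disjoint_filter.2 fun M hM hu hw => huw ?_
    exact Sym2.congr_right.1 (eq_of_mem_kMatchings hM (hu (mem_insert_self _ _))
      (hw (mem_insert_self _ _)) (Sym2.mem_mk_left v u) (Sym2.mem_mk_left v w))

theorem card_filter_subset_kMatchings_top {j : ℕ} (hV : Fintype.card V = 2 * (k + j))
    (hA : A ∈ kMatchings (⊤ : SimpleGraph V) k) :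
    #{M ∈ kMatchings (⊤ : SimpleGraph V) (k + j) | A ⊆ M} = (2 * j - 1)‼ := by
  induction j generalizing k A with
  | zero =>
    have hself : {M ∈ kMatchings (⊤ : SimpleGraph V) k | A ⊆ M} = {A} := by
      ext M
      rw [mem_filter, mem_singleton]
      refine ⟨fun ⟨hM, hAM⟩ => (eq_of_subset_of_card_le hAM ?_).symm, ?_⟩
      · rw [(mem_kMatchings.1 hA).2.1, (mem_kMatchings.1 hM).2.1]
      · rintro rfl
        exact ⟨hA, Subset.rfl⟩
    simp [hself]
  | succ j ih =>
    have huncovered : #(coveredVerts A)ᶜ = 2 * j + 2 := by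
      rw [card_compl, card_coveredVerts hA, hV]
      lia
    obtain ⟨v, hv⟩ : (coveredVerts A)ᶜ.Nonempty := card_pos.1 (by lia)
    have hextend : ∀ w ∈ (coveredVerts A)ᶜ.erase v,
        #{M ∈ kMatchings (⊤ : SimpleGraph V) (k + (j + 1)) | insert s(v, w) A ⊆ M} =
          (2 * j - 1)‼ := by
      intro w hw
      obtain ⟨hwv, hwA⟩ := mem_erase.1 hw
      rw [← add_assoc, add_right_comm] at hV ⊢
      refine ih hV (insert_mem_kMatchings hA (mem_edgeFinset.2 hwv.symm) ?_)
      rw [Sym2.toFinset_mk_eq, disjoint_insert_left, disjoint_singleton_left]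
      exact ⟨mem_compl.1 hv, mem_compl.1 hwA⟩
    rw [card_filter_subset_kMatchings_eq_sum hV (mem_compl.1 hv), sum_const_nat hextend,
      card_erase_of_mem hv, huncovered]
    exact (Nat.doubleFactorial_add_one (2 * j)).symm

end Matchings

section PerfectMatchings

open Finset
open scoped Nat

theorem injOn_edgeSet_isPerfectMatching {V : Type} (G : SimpleGraph V) :
    Set.InjOn Subgraph.edgeSet {P : G.Subgraph | P.IsPerfectMatching} := by
  intro P hP Q hQ hPQ
  refine Subgraph.ext (by rw [hP.2.verts_eq_univ, hQ.2.verts_eq_univ]) ?_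
  funext v w
  rw [← Subgraph.mem_edgeSet, hPQ, Subgraph.mem_edgeSet]

variable {V : Type} [Fintype V] [DecidableEq V] (G : SimpleGraph V) [DecidableRel G.Adj] {n : ℕ}

variable {G} in
theorem mem_kMatchings_of_isPerfectMatching (hV : Fintype.card V = 2 * n) {P : G.Subgraph}
    (hP : P.IsPerfectMatching) {M : Finset (Sym2 V)} (hM : P.edgeSet = M) :
    M ∈ kMatchings G n := by
  have hadj {v w : V} : P.Adj v w ↔ s(v, w) ∈ M := by
    rw [← Subgraph.mem_edgeSet, hM, mem_coe]
  have hperfect := Subgraph.isPerfectMatching_iff.1 hP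
  have hmatching : M ∈ kMatchings G #M := by
    refine mem_kMatchings.2 ⟨?_, rfl, fun e he f hf hef => ?_⟩
    · rw [← coe_subset, coe_edgeFinset, ← hM]
      exact P.edgeSet_subset
    · refine disjoint_left.2 fun v hve hvf => hef ?_
      obtain ⟨u, rfl⟩ := Sym2.mem_toFinset.1 hve
      obtain ⟨w, rfl⟩ := Sym2.mem_toFinset.1 hvf
      rw [(hperfect v).unique (hadj.2 he) (hadj.2 hf)]
  have hcover : coveredVerts M = univ := eq_univ_of_forall fun v =>
    have ⟨w, hvw, _⟩ := hperfect v
    mem_coveredVerts.2 ⟨s(v, w), hadj.1 hvw, Sym2.mem_mk_left v w⟩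
  have hcard := card_coveredVerts hmatching
  rw [hcover, card_univ, hV, Nat.mul_right_inj two_ne_zero] at hcard
  rwa [hcard]

variable {G} in
theorem exists_isPerfectMatching_edgeSet_eq (hV : Fintype.card V = 2 * n) {M : Finset (Sym2 V)}
    (hM : M ∈ kMatchings G n) : ∃ P : G.Subgraph, P.IsPerfectMatching ∧ P.edgeSet = M := by
  have hMG : (M : Set (Sym2 V)) ⊆ G.edgeSet := by
    rw [← coe_edgeFinset]
    exact coe_subset.2 (mem_kMatchings.1 hM).1
  let P : G.Subgraph := {
    verts := Set.univ
    Adj v w := s(v, w) ∈ M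
    adj_sub h := hMG h
    edge_vert _ := Set.mem_univ _
    symm := ⟨fun v w h => by rwa [Sym2.eq_swap]⟩ }
  refine ⟨P, Subgraph.isPerfectMatching_iff.2 fun v => ?_, by ext ⟨v, w⟩; rfl⟩
  obtain ⟨_, he, w, rfl⟩ := mem_coveredVerts.1 (coveredVerts_eq_univ hV hM ▸ mem_univ v)
  exact ⟨w, he, fun u hu => Sym2.congr_right.1
    (eq_of_mem_kMatchings hM hu he (Sym2.mem_mk_left v u) (Sym2.mem_mk_left v w))⟩

theorem pmCount_eq_card_kMatchings (hV : Fintype.card V = 2 * n) :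
    pmCount G = #(kMatchings G n) := by
  have himage : Subgraph.edgeSet '' {P : G.Subgraph | P.IsPerfectMatching} =
      (fun M : Finset (Sym2 V) => (M : Set (Sym2 V))) '' kMatchings G n := by
    ext E
    constructor
    · rintro ⟨P, hP, rfl⟩
      have hfin := P.edgeSet.toFinite.coe_toFinset
      exact ⟨_, mem_kMatchings_of_isPerfectMatching hV hP hfin.symm, hfin⟩
    · rintro ⟨M, hM, rfl⟩
      exact exists_isPerfectMatching_edgeSet_eq hV hM
  rw [pmCount, ← (injOn_edgeSet_isPerfectMatching G).ncard_image, himage,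
    Set.ncard_image_of_injective _ coe_injective, Set.ncard_coe_finset]

omit [DecidableEq V] in
theorem pmCount_top (hV : Fintype.card V = 2 * n) :
    pmCount (⊤ : SimpleGraph V) = (2 * n - 1)‼ := by
  classical
  have hempty : ∅ ∈ kMatchings (⊤ : SimpleGraph V) 0 := by simp [kMatchings_zero]
  rw [pmCount_eq_card_kMatchings _ hV,
    ← card_filter_subset_kMatchings_top (hV.trans (by rw [zero_add])) hempty]
  simp

theorem subset_edgeFinset_iff_disjoint_compl {M : Finset (Sym2 V)} :
    M ⊆ G.edgeFinset ↔ M ⊆ (⊤ : SimpleGraph V).edgeFinset ∧ Disjoint M Gᶜ.edgeFinset := by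
  have hmem (e : Sym2 V) :
      e ∈ G.edgeFinset ↔ e ∈ (⊤ : SimpleGraph V).edgeFinset ∧ e ∉ Gᶜ.edgeFinset := by
    induction e with | _ v w =>
    simp only [mem_edgeFinset, mem_edgeSet, top_adj, compl_adj, not_and, not_not]
    exact ⟨fun h => ⟨h.ne, fun _ => h⟩, fun h => h.2 h.1⟩
  simp only [subset_iff, Finset.disjoint_left, hmem, forall_and]

theorem kMatchings_eq_filter_disjoint_compl :
    kMatchings G n = {M ∈ kMatchings (⊤ : SimpleGraph V) n | Disjoint M Gᶜ.edgeFinset} := by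
  ext M
  simp only [mem_filter, mem_kMatchings, subset_edgeFinset_iff_disjoint_compl G]
  tauto

variable (H : SimpleGraph V) [DecidableRel H.Adj] in
theorem sum_neg_one_pow_mul_card_filter_subset_kMatchings {M : Finset (Sym2 V)}
    {K : SimpleGraph V} [DecidableRel K.Adj] (hM : M ∈ kMatchings K n) :
    ∑ k ∈ range (n + 1), (-1 : ℤ) ^ k * #{A ∈ kMatchings H k | A ⊆ M} =
      if Disjoint M H.edgeFinset then 1 else 0 := by
  have hle : #(M ∩ H.edgeFinset) ≤ n :=
    (card_le_card inter_subset_left).trans_eq (mem_kMatchings.1 hM).2.1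
  simp only [card_filter_subset_kMatchings H _ hM, disjoint_iff_inter_eq_empty, ← card_eq_zero]
  rw [← Int.alternating_sum_range_choose]
  refine (sum_subset (range_mono (Nat.succ_le_succ hle)) fun k _ hk => ?_).symm
  rw [Nat.choose_eq_zero_of_lt (by simpa using hk), Nat.cast_zero, mul_zero]

theorem sum_card_filter_subset_kMatchings_top {k : ℕ} (hV : Fintype.card V = 2 * n) (hk : k ≤ n) :
    ∑ M ∈ kMatchings (⊤ : SimpleGraph V) n, #{A ∈ kMatchings G k | A ⊆ M} =
      #(kMatchings G k) * (2 * (n - k) - 1)‼ := by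
  obtain ⟨j, rfl⟩ := Nat.exists_eq_add_of_le hk
  rw [Nat.add_sub_cancel_left, ← sum_const_nat fun A hA =>
    card_filter_subset_kMatchings_top hV (kMatchings_mono (le_top (a := G)) k hA)]
  exact (sum_card_bipartiteAbove_eq_sum_card_bipartiteBelow
    (r := fun A B : Finset (Sym2 V) => A ⊆ B)).symm

theorem pmCount_eq_sum_card_kMatchings_compl (hV : Fintype.card V = 2 * n) :
    (pmCount G : ℤ) =
      ∑ k ∈ range (n + 1), (-1) ^ k * ((#(kMatchings Gᶜ k) * (2 * (n - k) - 1)‼ : ℕ) : ℤ) := by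
  calc (pmCount G : ℤ)
      = ∑ M ∈ kMatchings (⊤ : SimpleGraph V) n, if Disjoint M Gᶜ.edgeFinset then 1 else 0 := by
        rw [pmCount_eq_card_kMatchings G hV, kMatchings_eq_filter_disjoint_compl, sum_boole]
    _ = ∑ M ∈ kMatchings (⊤ : SimpleGraph V) n, ∑ k ∈ range (n + 1),
          (-1) ^ k * (#{A ∈ kMatchings Gᶜ k | A ⊆ M} : ℤ) :=
        sum_congr rfl fun M hM =>
          (sum_neg_one_pow_mul_card_filter_subset_kMatchings Gᶜ hM).symm
    _ = ∑ k ∈ range (n + 1), (-1) ^ k *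
          ((∑ M ∈ kMatchings (⊤ : SimpleGraph V) n, #{A ∈ kMatchings Gᶜ k | A ⊆ M} : ℕ) : ℤ) := by
        rw [sum_comm]
        simp only [Nat.cast_sum, mul_sum]
    _ = _ := sum_congr rfl fun k hk => by
        rw [sum_card_filter_subset_kMatchings_top Gᶜ hV (mem_range_succ_iff.1 hk)]

end PerfectMatchings

section Asymptotics

open Finset
open scoped Nat

theorem succ_succ_pow_le_exp_one_mul_pow {k m : ℕ} (hk : 2 * k ≤ m) :
    ((m + 2 : ℕ) : ℝ) ^ k ≤ Real.exp 1 * (m : ℝ) ^ k := by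
  rcases m.eq_zero_or_pos with rfl | hm
  · obtain rfl : k = 0 := by lia
    simp
  have hm' : (0 : ℝ) < m := Nat.cast_pos.2 hm
  have hexponent : k * (2 / m : ℝ) ≤ 1 := by
    rw [← mul_div_assoc, div_le_one hm', mul_comm]
    exact_mod_cast hk
  calc ((m + 2 : ℕ) : ℝ) ^ k = (2 / m + 1) ^ k * (m : ℝ) ^ k := by
        rw [← mul_pow]
        congr 1
        push_cast
        field_simp
        ring
    _ ≤ Real.exp (2 / m) ^ k * (m : ℝ) ^ k := by
        gcongr
        exact Real.add_one_le_exp _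
    _ ≤ Real.exp 1 * (m : ℝ) ^ k := by
        rw [← Real.exp_nat_mul]
        gcongr

theorem pow_mul_doubleFactorial_le {k m : ℕ} (hk : 2 * k ≤ m) :
    (m : ℝ) ^ k * (m - 2 * k - 1)‼ ≤ (2 * Real.exp 1) ^ k * (m - 1)‼ := by
  induction k generalizing m with
  | zero => simp
  | succ k ih =>
    obtain ⟨m, rfl⟩ := Nat.exists_eq_add_of_le' (show 2 ≤ m by lia)
    have hk' : 2 * k ≤ m := by lia
    calc ((m + 2 : ℕ) : ℝ) ^ (k + 1) * (m + 2 - 2 * (k + 1) - 1)‼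
        = (m + 2 : ℕ) * ((m + 2 : ℕ) : ℝ) ^ k * (m - 2 * k - 1)‼ := by
          rw [pow_succ', show m + 2 - 2 * (k + 1) = m - 2 * k by lia]
      _ ≤ (2 * (m + 1 : ℕ)) * (Real.exp 1 * (m : ℝ) ^ k) * (m - 2 * k - 1)‼ := by
          gcongr
          · exact_mod_cast (by lia : m + 2 ≤ 2 * (m + 1))
          · exact succ_succ_pow_le_exp_one_mul_pow hk'
      _ = 2 * Real.exp 1 * (m + 1 : ℕ) * ((m : ℝ) ^ k * (m - 2 * k - 1)‼) := by ring
      _ ≤ 2 * Real.exp 1 * (m + 1 : ℕ) * ((2 * Real.exp 1) ^ k * (m - 1)‼) :=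
          mul_le_mul_of_nonneg_left (ih hk') (by positivity)
      _ = (2 * Real.exp 1) ^ (k + 1) * (m + 2 - 1)‼ := by
          rw [Nat.add_succ_sub_one, Nat.doubleFactorial_add_one]
          push_cast
          ring

theorem tendsto_pow_mul_doubleFactorial_div (k : ℕ) :
    Tendsto (fun m : ℕ => (m : ℝ) ^ k * (m - 2 * k - 1)‼ / (m - 1)‼) atTop (𝓝 1) := by
  induction k with
  | zero =>
    refine tendsto_const_nhds.congr fun m => ?_
    have := (m - 1).doubleFactorial_pos.ne'
    simp [this]
  | succ k ih =>
    have hratio : Tendsto (fun m : ℕ => (m : ℝ) / (m + (-(2 * k + 1) : ℝ))) atTop (𝓝 1) :=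
      tendsto_natCast_div_add_atTop _
    rw [← one_mul (1 : ℝ)]
    refine (ih.mul hratio).congr' ?_
    filter_upwards [eventually_ge_atTop (2 * k + 3)] with m hm
    obtain ⟨j, rfl⟩ := Nat.exists_eq_add_of_le hm
    rw [show 2 * k + 3 + j - 2 * k - 1 = j + 2 by lia,
      show 2 * k + 3 + j - 2 * (k + 1) - 1 = j by lia, Nat.doubleFactorial_add_two]
    have hj : (j : ℝ) + 2 ≠ 0 := by positivity
    push_cast
    rw [show (2 * k + 3 + j + -(2 * k + 1) : ℝ) = j + 2 by ring]
    field_simp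
    ring

section FiniteBounds

variable {V : Type*} [Fintype V] [DecidableEq V] (H : SimpleGraph V) [DecidableRel H.Adj]

/-- The expected number of `k`-edge matchings of `H` contained in a uniformly random perfect
matching of the complete graph on `V`; equivalently, the `k`-th binomial moment of the number of
edges of `H` used by such a perfect matching. The probability that a given `k`-edge matching is
contained in it is a quotient of double factorials; this reading assumes that `V` has an even
number of elements. -/
noncomputable def binomialMoment (k : ℕ) : ℝ :=
  #(kMatchings H k) * (Fintype.card V - 2 * k - 1)‼ / (Fintype.card V - 1)‼

theorem binomialMoment_nonneg (k : ℕ) : 0 ≤ binomialMoment H k := by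
  unfold binomialMoment
  positivity

theorem binomialMoment_eq_zero {k : ℕ} (hk : Fintype.card V < 2 * k) : binomialMoment H k = 0 := by
  have hempty : kMatchings H k = ∅ := eq_empty_of_forall_notMem fun _ hM =>
    hk.not_ge (two_mul_le_card_of_mem_kMatchings hM)
  simp [binomialMoment, hempty]

theorem binomialMoment_le (k : ℕ) : binomialMoment H k ≤
    (2 * Real.exp 1 * (#H.edgeFinset / Fintype.card V)) ^ k / k ! := by
  rcases lt_or_ge (Fintype.card V) (2 * k) with hk | hk
  · rw [binomialMoment_eq_zero H hk]
    positivity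
  have hpow : (0 : ℝ) < (Fintype.card V : ℝ) ^ k := by
    rcases k.eq_zero_or_pos with rfl | hk0
    · simp
    · have : 0 < Fintype.card V := by lia
      positivity
  have hdf : (0 : ℝ) < (Fintype.card V - 1)‼ := Nat.cast_pos.2 (Nat.doubleFactorial_pos _)
  have hcount : (#(kMatchings H k) : ℝ) ≤ (#H.edgeFinset : ℝ) ^ k / k ! :=
    (Nat.cast_le.2 (card_kMatchings_le_choose H k)).trans (Nat.choose_le_pow_div k _)
  calc binomialMoment H k
      = #(kMatchings H k) / (Fintype.card V : ℝ) ^ k *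
          ((Fintype.card V : ℝ) ^ k * (Fintype.card V - 2 * k - 1)‼ / (Fintype.card V - 1)‼) := by
        unfold binomialMoment
        field_simp
    _ ≤ (#H.edgeFinset : ℝ) ^ k / k ! / (Fintype.card V : ℝ) ^ k * (2 * Real.exp 1) ^ k := by
        gcongr
        exact (div_le_iff₀ hdf).2 (pow_mul_doubleFactorial_le hk)
    _ = (2 * Real.exp 1 * (#H.edgeFinset / Fintype.card V)) ^ k / k ! := by
        rw [mul_pow _ (_ / _), div_pow]
        ring

theorem card_kMatchings_succ_div_pow_le (k : ℕ) :
    (#(kMatchings H (k + 1)) : ℝ) / (Fintype.card V : ℝ) ^ (k + 1) ≤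
      #(kMatchings H k) / (Fintype.card V : ℝ) ^ k * (#H.edgeFinset / Fintype.card V) /
        (k + 1) := by
  have hcount : ((k + 1) * #(kMatchings H (k + 1)) : ℝ) ≤ #(kMatchings H k) * #H.edgeFinset := by
    exact_mod_cast succ_mul_card_kMatchings_succ_le H k
  rw [div_mul_div_comm, ← pow_succ, le_div_iff₀ (by positivity), div_mul_eq_mul_div]
  exact div_le_div_of_nonneg_right (by linarith) (by positivity)

theorem le_card_kMatchings_succ_div_pow (k : ℕ) :
    #(kMatchings H k) / (Fintype.card V : ℝ) ^ k *
        (#H.edgeFinset / Fintype.card V - 2 * k * (H.maxDegree / Fintype.card V)) / (k + 1) ≤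
      #(kMatchings H (k + 1)) / (Fintype.card V : ℝ) ^ (k + 1) := by
  have hcount : (#(kMatchings H k) * #H.edgeFinset : ℝ) ≤
      (k + 1) * #(kMatchings H (k + 1)) + #(kMatchings H k) * (2 * k * H.maxDegree) := by
    exact_mod_cast card_kMatchings_mul_card_edgeFinset_le H k
  rw [← mul_div_assoc, ← sub_div, div_mul_div_comm, ← pow_succ, div_le_iff₀ (by positivity),
    div_mul_eq_mul_div]
  exact div_le_div_of_nonneg_right (by linarith) (by positivity)

end FiniteBounds

theorem pmCount_div_pmCount_top_eq_tsum {V : Type} [Fintype V] [DecidableEq V]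
    (G : SimpleGraph V) [DecidableRel G.Adj] (hV : Even (Fintype.card V)) :
    (pmCount G : ℝ) / pmCount (⊤ : SimpleGraph V) =
      ∑' k, (-1) ^ k * binomialMoment Gᶜ k := by
  obtain ⟨n, hn⟩ := even_iff_exists_two_mul.1 hV
  have hvanish : ∀ k ∉ range (n + 1), (-1 : ℝ) ^ k * binomialMoment Gᶜ k = 0 := by
    intro k hk
    rw [mem_range] at hk
    rw [binomialMoment_eq_zero Gᶜ (by lia), mul_zero]
  have hcount : (pmCount G : ℝ) = ∑ k ∈ range (n + 1),
      (-1) ^ k * (#(kMatchings Gᶜ k) * (2 * (n - k) - 1)‼ : ℝ) := by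
    exact_mod_cast congrArg (Int.cast : ℤ → ℝ) (pmCount_eq_sum_card_kMatchings_compl G hn)
  rw [tsum_eq_sum hvanish, hcount, pmCount_top hn, sum_div]
  simp only [binomialMoment, hn, Nat.mul_sub, mul_div_assoc]

section Sequences

variable {ι : Type*} {l : Filter ι} {V : ι → Type*} [∀ i, Fintype (V i)] [∀ i, DecidableEq (V i)]
  {H : ∀ i, SimpleGraph (V i)} [∀ i, DecidableRel (H i).Adj] {c : ℝ}

theorem tendsto_card_kMatchings_div_pow
    (hdeg : Tendsto (fun i => ((H i).maxDegree : ℝ) / Fintype.card (V i)) l (𝓝 0))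
    (hedge : Tendsto (fun i => (#(H i).edgeFinset : ℝ) / Fintype.card (V i)) l (𝓝 c)) (k : ℕ) :
    Tendsto (fun i => (#(kMatchings (H i) k) : ℝ) / (Fintype.card (V i) : ℝ) ^ k) l
      (𝓝 (c ^ k / k !)) := by
  induction k with
  | zero => simp [kMatchings_zero, tendsto_const_nhds]
  | succ k ih =>
    have hupper := (ih.mul hedge).div_const (k + 1 : ℝ)
    have hlower := (ih.mul (hedge.sub (hdeg.const_mul (2 * k : ℝ)))).div_const (k + 1 : ℝ)
    rw [mul_zero, sub_zero] at hlower
    have hlimit : c ^ k / k ! * c / (k + 1) = c ^ (k + 1) / (k + 1)! := by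
      rw [Nat.factorial_succ, pow_succ]
      push_cast
      field_simp
    rw [← hlimit]
    exact tendsto_of_tendsto_of_tendsto_of_le_of_le hlower hupper
      (fun i => le_card_kMatchings_succ_div_pow (H i) k)
      fun i => card_kMatchings_succ_div_pow_le (H i) k

theorem tendsto_binomialMoment (hV : Tendsto (fun i => Fintype.card (V i)) l atTop)
    (hdeg : Tendsto (fun i => ((H i).maxDegree : ℝ) / Fintype.card (V i)) l (𝓝 0))
    (hedge : Tendsto (fun i => (#(H i).edgeFinset : ℝ) / Fintype.card (V i)) l (𝓝 c)) (k : ℕ) :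
    Tendsto (fun i => binomialMoment (H i) k) l (𝓝 (c ^ k / k !)) := by
  rw [← mul_one (c ^ k / k ! : ℝ)]
  refine ((tendsto_card_kMatchings_div_pow hdeg hedge k).mul
    ((tendsto_pow_mul_doubleFactorial_div k).comp hV)).congr' ?_
  filter_upwards [hV.eventually_gt_atTop 0] with i hi
  have : (Fintype.card (V i) : ℝ) ≠ 0 := Nat.cast_ne_zero.2 hi.ne'
  simp only [binomialMoment, Function.comp_apply]
  field_simp

end Sequences

end Asymptotics

theorem stmt_18_general {ι : Type*} {l : Filter ι} {V : ι → Type} [∀ i, Fintype (V i)]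
    [∀ i, DecidableEq (V i)] (G : ∀ i, SimpleGraph (V i)) [∀ i, DecidableRel (G i).Adj] {c : ℝ}
    (heven : ∀ᶠ i in l, Even (Fintype.card (V i)))
    (hV : Tendsto (fun i => Fintype.card (V i)) l atTop)
    (hdeg : Tendsto (fun i => ((G i)ᶜ.maxDegree : ℝ) / Fintype.card (V i)) l (𝓝 0))
    (hedge : Tendsto (fun i => ((G i)ᶜ.edgeFinset.card : ℝ) / Fintype.card (V i)) l (𝓝 c)) :
    Tendsto (fun i => (pmCount (G i) : ℝ) / pmCount (⊤ : SimpleGraph (V i))) l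
      (𝓝 (Real.exp (-c))) := by
  have hexp : Real.exp (-c) = ∑' k : ℕ, (-1) ^ k * (c ^ k / k.factorial) := by
    simp only [Real.exp_eq_exp_ℝ, NormedSpace.exp_eq_tsum_div, neg_pow c, mul_div_assoc]
  rw [hexp]
  refine Tendsto.congr' (heven.mono fun i hi => (pmCount_div_pmCount_top_eq_tsum (G i) hi).symm) ?_
  refine tendsto_tsum_of_dominated_convergence
    (Real.summable_pow_div_factorial (2 * Real.exp 1 * (c + 1)))
    (fun k => (tendsto_binomialMoment hV hdeg hedge k).const_mul _) ?_
  filter_upwards [hedge.eventually_le_const (lt_add_one c)] with i hi k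
  rw [norm_mul, norm_pow, norm_neg, norm_one, one_pow, one_mul,
    Real.norm_of_nonneg (binomialMoment_nonneg _ k)]
  exact (binomialMoment_le _ k).trans (by gcongr)

section Regular

open Finset

variable {V : Type*} [Fintype V] {H : SimpleGraph V} [DecidableRel H.Adj] {d : ℕ}

theorem card_edgeFinset_div_card_of_isRegularOfDegree [Nonempty V]
    (hH : H.IsRegularOfDegree d) : (#H.edgeFinset : ℝ) / Fintype.card V = d / 2 := by
  have hsum := H.sum_degrees_eq_twice_card_edges
  simp only [hH.degree_eq, sum_const, card_univ, smul_eq_mul] at hsum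
  rw [div_eq_div_iff (Nat.cast_ne_zero.2 Fintype.card_ne_zero) two_ne_zero]
  exact_mod_cast (by lia : #H.edgeFinset * 2 = d * Fintype.card V)

theorem isRegularOfDegree_compl_of_sub [DecidableEq V] (hd : d < Fintype.card V)
    (hH : H.IsRegularOfDegree (Fintype.card V - d - 1)) : Hᶜ.IsRegularOfDegree d := by
  convert hH.compl using 1
  lia

end Regular

theorem tendsto_pmCount_div_of_isRegularOfDegree {ι : Type*} {l : Filter ι} {V : ι → Type}
    [∀ i, Fintype (V i)] (G : ∀ i, SimpleGraph (V i)) [∀ i, DecidableRel (G i).Adj] {d : ℕ}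
    (heven : ∀ᶠ i in l, Even (Fintype.card (V i)))
    (hV : Tendsto (fun i => Fintype.card (V i)) l atTop)
    (hreg : ∀ᶠ i in l, (G i).IsRegularOfDegree (Fintype.card (V i) - d - 1)) :
    Tendsto (fun i => (pmCount (G i) : ℝ) / pmCount (⊤ : SimpleGraph (V i))) l
      (𝓝 (Real.exp (-(d / 2 : ℝ)))) := by
  classical
  have hcompl : ∀ᶠ i in l, Nonempty (V i) ∧ (G i)ᶜ.IsRegularOfDegree d := by
    filter_upwards [hV.eventually_gt_atTop d, hreg] with i hd hi
    exact ⟨Fintype.card_pos_iff.1 (d.zero_le.trans_lt hd), isRegularOfDegree_compl_of_sub hd hi⟩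
  refine stmt_18_general G heven hV ?_ ?_
  · refine ((tendsto_const_div_atTop_nhds_zero_nat (d : ℝ)).comp hV).congr' ?_
    filter_upwards [hcompl] with i ⟨_, hi⟩
    rw [hi.maxDegree_eq, Function.comp_apply]
  · refine tendsto_const_nhds.congr' ?_
    filter_upwards [hcompl] with i ⟨_, hi⟩
    exact (card_edgeFinset_div_card_of_isRegularOfDegree hi).symm

/-- For a fixed nonnegative integer `d` and a sequence `G n` of `(2n-d-1)`-regular
graphs on `2n` vertices, `pm(G n) / pm(K_{2n}) → e^{-d/2}` as `n → ∞`. -/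
theorem stmt_18 (d : ℕ) (G : ∀ n : ℕ, SimpleGraph (Fin (2 * n)))
    [∀ n, DecidableRel (G n).Adj]
    (hreg : ∀ n, (G n).IsRegularOfDegree (2 * n - d - 1)) :
    Tendsto
      (fun n : ℕ =>
        (pmCount (G n) : ℝ) / (pmCount (⊤ : SimpleGraph (Fin (2 * n))) : ℝ))
      atTop (𝓝 (Real.exp (-(d : ℝ) / 2))) := by
  have hcard : Tendsto (fun n => Fintype.card (Fin (2 * n))) atTop atTop := by
    simpa using tendsto_id.const_mul_atTop' two_pos
  rw [neg_div]
  exact tendsto_pmCount_div_of_isRegularOfDegree G (.of_forall fun n => by simp) hcard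
    (.of_forall fun n => by simpa using hreg n)
end
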